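/- There exist constants c, C > 0 depending on β, n and a cube Q₀ such that for every nonnegative function f and all t > 0, H^β_∞({x : M_{H^β_∞} f(x) > t}) ≤ C H^β_∞({x : M^{β,Q₀}_∞ f(x) > c t}), where M^{β,Q₀}_∞ is the dyadic Hausdorff content maximal function associated with the dyadic lattice generated by Q₀. -/

import Mathlib

open scoped ENNReal
open Metric Set MeasureTheory

noncomputable section

/-- `ℝⁿ` as Euclidean space. -/
abbrev Rn (n : ℕ) := EuclideanSpace ℝ (Fin n)

/-- The Choquet integral of a nonnegative function `g` with respect to a
(monotone) set function `C`: `∫ g dC := ∫_0^∞ C({g > t}) dt`. -/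
noncomputable def choquet {X : Type*} (C : Set X → ℝ≥0∞) (g : X → ℝ≥0∞) : ℝ≥0∞ :=
  ∫⁻ t in Ioi (0 : ℝ), C {x | ENNReal.ofReal t < g x}

/-- The Choquet integral of `g` restricted to a set `A`. -/
noncomputable def choquetOn {X : Type*} (C : Set X → ℝ≥0∞) (A : Set X) (g : X → ℝ≥0∞) : ℝ≥0∞ :=
  ∫⁻ t in Ioi (0 : ℝ), C {x | x ∈ A ∧ ENNReal.ofReal t < g x}

/-- The `L^∞(C)` norm: `inf {λ > 0 : C({|f| > λ}) = 0}` (formulated in `ℝ≥0∞`). -/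
noncomputable def choquetEssSup {X : Type*} (C : Set X → ℝ≥0∞) (f : X → ℝ) : ℝ≥0∞ :=
  sInf {l : ℝ≥0∞ | C {x | l < ENNReal.ofReal |f x|} = 0}

/-- `C`-quasicontinuity of a function `f`. -/
def QuasiCont {X : Type*} [TopologicalSpace X] (C : Set X → ℝ≥0∞) (f : X → ℝ) : Prop :=
  ∀ ε : ℝ≥0∞, 0 < ε → ∃ U : Set X, IsOpen U ∧ C U < ε ∧ ContinuousOn f Uᶜ

/-- Membership in the capacitary space `L^p(C)`: `C`-quasicontinuous with
finite `p`-th power Choquet integral. -/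
def MemChoquetLp {X : Type*} [TopologicalSpace X] (C : Set X → ℝ≥0∞) (p : ℝ) (f : X → ℝ) : Prop :=
  QuasiCont C f ∧ choquet C (fun x => ENNReal.ofReal |f x| ^ p) < ∞

/-- The normalization constant `ω_β = π^{β/2}/Γ(β/2+1)`. -/
noncomputable def omegaC (β : ℝ) : ℝ≥0∞ :=
  ENNReal.ofReal (Real.pi ^ (β / 2) / Real.Gamma (β / 2 + 1))

/-- The `β`-dimensional Hausdorff content `H^β_∞`, defined via countable
coverings by balls: `inf {∑ ω_β r_i^β : E ⊆ ⋃ B(x_i, r_i)}`. -/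
noncomputable def hContent (n : ℕ) (β : ℝ) (E : Set (Rn n)) : ℝ≥0∞ :=
  ⨅ (c : ℕ → Rn n × ℝ) (_ : E ⊆ ⋃ i, ball (c i).1 (c i).2),
    ∑' i, omegaC β * ENNReal.ofReal ((c i).2 ^ β)

/-- The centered Hausdorff content maximal function
`M_{H^β_∞} g(x) := sup_{r>0} (1/(ω_β r^β)) ∫_{B(x,r)} g dH^β_∞`. -/
noncomputable def maximalH (n : ℕ) (β : ℝ) (g : Rn n → ℝ≥0∞) (x : Rn n) : ℝ≥0∞ :=
  ⨆ (r : ℝ) (_ : 0 < r),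
    (omegaC β * ENNReal.ofReal (r ^ β))⁻¹ * choquetOn (hContent n β) (ball x r) g

/-- A dyadic cube of generation `k` (side length `2^{-k} l`) at position `m`
in the dyadic lattice generated by the cube with corner `a` and side `l`. -/
def dyadicCube (n : ℕ) (a : Rn n) (l : ℝ) (k : ℤ) (m : Fin n → ℤ) : Set (Rn n) :=
  {x | ∀ i, a i + m i * ((2 : ℝ) ^ (-k) * l) ≤ x i ∧
        x i < a i + (m i + 1) * ((2 : ℝ) ^ (-k) * l)}

/-- The dyadic Hausdorff content `H^{β,Q₀}_∞` associated with the dyadic lattice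
generated by the cube `Q₀` with corner `a` and side length `l`:
`inf {∑ ℓ(Q_i)^β : E ⊆ ⋃ Q_i, Q_i ∈ D(Q₀)}`. -/
noncomputable def dContent (n : ℕ) (β : ℝ) (a : Rn n) (l : ℝ) (E : Set (Rn n)) : ℝ≥0∞ :=
  ⨅ (c : ℕ → ℤ × (Fin n → ℤ)) (_ : E ⊆ ⋃ i, dyadicCube n a l (c i).1 (c i).2),
    ∑' i, ENNReal.ofReal (((2 : ℝ) ^ (-(c i).1) * l) ^ β)

/-- The dyadic Hausdorff content maximal function
`M^{β,Q₀}_∞ g(x) := sup {(1/ℓ(Q)^β) ∫_Q g dH^{β,Q₀}_∞ : x ∈ Q ∈ D(Q₀)}`. -/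
noncomputable def dyadicMaximal (n : ℕ) (β : ℝ) (a : Rn n) (l : ℝ) (g : Rn n → ℝ≥0∞)
    (x : Rn n) : ℝ≥0∞ :=
  ⨆ (k : ℤ) (m : Fin n → ℤ) (_ : x ∈ dyadicCube n a l k m),
    (ENNReal.ofReal (((2 : ℝ) ^ (-k) * l) ^ β))⁻¹ *
      choquetOn (dContent n β a l) (dyadicCube n a l k m) g

lemma omegaC_pos {β : ℝ} (hβ : 0 < β) : 0 < omegaC β :=
  ENNReal.ofReal_pos.2 <| div_pos (Real.rpow_pos_of_pos Real.pi_pos _)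
    (Real.Gamma_pos_of_pos (by positivity))

lemma omegaC_ne_top (β : ℝ) : omegaC β ≠ ∞ := ENNReal.ofReal_ne_top

section Content

variable {n : ℕ} {β : ℝ}

lemma hContent_mono {A B : Set (Rn n)} (h : A ⊆ B) : hContent n β A ≤ hContent n β B :=
  le_iInf₂ fun c hc => iInf₂_le c (h.trans hc)

lemma hContent_le_tsum (hβ : 0 < β) {ι : Type*} [Countable ι] (x : ι → Rn n) (r : ι → ℝ)
    {E : Set (Rn n)} (hE : E ⊆ ⋃ i, ball (x i) (r i)) :
    hContent n β E ≤ ∑' i, omegaC β * ENNReal.ofReal (r i ^ β) := by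
  obtain ⟨g, hg⟩ := exists_injective_nat ι
  set c : ℕ → Rn n × ℝ := Function.extend g (fun i => (x i, r i)) (fun _ => (0, 0)) with hc
  have hcg : ∀ i, c (g i) = (x i, r i) := fun i => hg.extend_apply _ _ i
  have hsub : E ⊆ ⋃ j, ball (c j).1 (c j).2 := by
    refine hE.trans (iUnion_subset fun i => ?_)
    exact subset_iUnion_of_subset (g i) (by rw [hcg])
  refine (iInf₂_le c hsub).trans_eq ?_
  rw [← hg.tsum_eq]
  · simp [hcg]
  · intro j hj
    by_contra hjg
    refine hj ?_
    simp [hc, Function.extend_apply' _ _ _ hjg, Real.zero_rpow hβ.ne']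

lemma hContent_empty (hβ : 0 < β) : hContent n β ∅ = 0 := by
  simpa using hContent_le_tsum hβ (fun i : Empty => (i.elim : Rn n)) (fun i => i.elim)
    (empty_subset _)

lemma hContent_union_le (hβ : 0 < β) (A B : Set (Rn n)) :
    hContent n β (A ∪ B) ≤ hContent n β A + hContent n β B := by
  conv_rhs => simp only [hContent, ENNReal.iInf_add, ENNReal.add_iInf]
  refine le_iInf₂ fun d hd => le_iInf₂ fun c hc => ?_
  refine (hContent_le_tsum hβ (Sum.elim (fun i => (c i).1) fun i => (d i).1)
    (Sum.elim (fun i => (c i).2) fun i => (d i).2) ?_).trans_eq ?_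
  · rw [iUnion_sum]
    exact union_subset_union hc hd
  · rw [ENNReal.summable.tsum_sum ENNReal.summable]
    rfl

lemma hContent_iUnion_le (hβ : 0 < β) {ι : Type*} [Fintype ι] (A : ι → Set (Rn n)) :
    hContent n β (⋃ i, A i) ≤ ∑ i, hContent n β (A i) := by
  have key : ∀ s : Finset ι, hContent n β (⋃ i ∈ s, A i) ≤ ∑ i ∈ s, hContent n β (A i) := by
    classical
    intro s
    induction s using Finset.induction_on with
    | empty => simp [hContent_empty hβ]
    | insert i s hi ih =>
      rw [Finset.set_biUnion_insert, Finset.sum_insert hi]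
      exact (hContent_union_le hβ _ _).trans (by gcongr)
  simpa using key Finset.univ

lemma choquetOn_iUnion_le (hβ : 0 < β) {ι : Type*} [Fintype ι] {B : Set (Rn n)}
    {A : ι → Set (Rn n)} (hB : B ⊆ ⋃ i, A i) (f : Rn n → ℝ≥0∞) :
    choquetOn (hContent n β) B f ≤ ∑ i, choquetOn (hContent n β) (A i) f := by
  unfold choquetOn
  rw [← lintegral_finsetSum]
  · refine lintegral_mono fun t => ?_
    refine (hContent_mono ?_).trans (hContent_iUnion_le hβ _)
    rintro x ⟨hx, ht⟩
    obtain ⟨i, hi⟩ := mem_iUnion.1 (hB hx)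
    exact mem_iUnion.2 ⟨i, hi, ht⟩
  · intro i _
    refine Antitone.measurable fun s t hst => hContent_mono ?_
    rintro x ⟨hx, ht⟩
    exact ⟨hx, (ENNReal.ofReal_le_ofReal hst).trans_lt ht⟩

end Content

section Cubes

variable {n : ℕ} {a : Rn n} {l : ℝ}

/-- The lower corner of the dyadic cube `dyadicCube n a l k m`. -/
def cubeCorner (n : ℕ) (a : Rn n) (l : ℝ) (k : ℤ) (m : Fin n → ℤ) : Rn n :=
  WithLp.toLp 2 fun i => a i + m i * ((2 : ℝ) ^ (-k) * l)

lemma cubeCorner_mem (hl : 0 < l) (k : ℤ) (m : Fin n → ℤ) :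
    cubeCorner n a l k m ∈ dyadicCube n a l k m := by
  intro i
  have : (0 : ℝ) < (2 : ℝ) ^ (-k) * l := by positivity
  simp only [cubeCorner]
  constructor <;> nlinarith

lemma dyadicCube_subset (hl : 0 < l) {k k' : ℤ} {m m' : Fin n → ℤ} (hk : k' ≤ k) {y : Rn n}
    (hy : y ∈ dyadicCube n a l k m) (hy' : y ∈ dyadicCube n a l k' m') :
    dyadicCube n a l k m ⊆ dyadicCube n a l k' m' := by
  obtain ⟨d, rfl⟩ := Int.le.dest hk
  have hs : (0 : ℝ) < (2 : ℝ) ^ (-(k' + d)) * l := by positivity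
  have hs' : (2 : ℝ) ^ (-k') * l = (2 ^ d : ℤ) * ((2 : ℝ) ^ (-(k' + d)) * l) := by
    rw [← mul_assoc]
    congr 1
    push_cast
    rw [← zpow_natCast, ← zpow_add₀ (by norm_num)]
    congr 1
    ring
  intro z hz i
  obtain ⟨h1, h2⟩ := hy i
  obtain ⟨h3, h4⟩ := hy' i
  obtain ⟨h5, h6⟩ := hz i
  rw [hs'] at h3 h4 ⊢
  set s := (2 : ℝ) ^ (-(k' + d)) * l
  set N : ℤ := 2 ^ d
  have e1 : m' i * N ≤ m i := by
    have : ((m' i * N : ℤ) : ℝ) < ((m i + 1 : ℤ) : ℝ) := by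
      refine lt_of_mul_lt_mul_right ?_ hs.le
      push_cast
      linarith
    exact Int.lt_add_one_iff.1 (by exact_mod_cast this)
  have e2 : m i + 1 ≤ (m' i + 1) * N := by
    have : ((m i : ℤ) : ℝ) < (((m' i + 1) * N : ℤ) : ℝ) := by
      refine lt_of_mul_lt_mul_right ?_ hs.le
      push_cast
      linarith
    exact Int.add_one_le_iff.2 (by exact_mod_cast this)
  have e1' : (m' i : ℝ) * N * s ≤ m i * s :=
    mul_le_mul_of_nonneg_right (by exact_mod_cast e1) hs.le
  have e2' : ((m i : ℝ) + 1) * s ≤ (m' i + 1) * N * s :=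
    mul_le_mul_of_nonneg_right (by exact_mod_cast e2) hs.le
  constructor <;> linarith

lemma dyadicCube_index_eq (hl : 0 < l) {k : ℤ} {m m' : Fin n → ℤ} {y : Rn n}
    (hy : y ∈ dyadicCube n a l k m) (hy' : y ∈ dyadicCube n a l k m') : m = m' := by
  have hs : (0 : ℝ) < (2 : ℝ) ^ (-k) * l := by positivity
  have key : ∀ {p q : Fin n → ℤ}, y ∈ dyadicCube n a l k p → y ∈ dyadicCube n a l k q →
      ∀ i, p i ≤ q i := by
    intro p q hp hq i
    have h1 := (hp i).1
    have h2 := (hq i).2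
    have : ((p i : ℤ) : ℝ) < ((q i + 1 : ℤ) : ℝ) := by
      refine lt_of_mul_lt_mul_right ?_ hs.le
      push_cast
      linarith
    exact Int.lt_add_one_iff.1 (by exact_mod_cast this)
  exact funext fun i => le_antisymm (key hy hy' i) (key hy' hy i)

lemma volume_dyadicCube (k : ℤ) (m : Fin n → ℤ) :
    volume (dyadicCube n a l k m) = ENNReal.ofReal ((2 : ℝ) ^ (-k) * l) ^ n := by
  set s := (2 : ℝ) ^ (-k) * l
  have h : dyadicCube n a l k m = (MeasurableEquiv.toLp 2 (Fin n → ℝ)).symm ⁻¹'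
      (univ.pi fun i => Ico (a i + m i * s) (a i + (m i + 1) * s)) := by
    ext x
    simp [dyadicCube, s]
  rw [h, (EuclideanSpace.volume_preserving_symm_measurableEquiv_toLp (Fin n)).measure_preimage
    (MeasurableSet.univ_pi fun i => measurableSet_Ico).nullMeasurableSet, Real.volume_pi_Ico]
  simp [add_mul]

lemma rpow_side_le_tsum {β : ℝ} (hβ0 : 0 < β) (hβn : β < n) (hl : 0 < l) {ι : Type*} [Countable ι]
    (K : ι → ℤ) (M : ι → Fin n → ℤ) {k : ℤ} {m : Fin n → ℤ}
    (h : dyadicCube n a l k m ⊆ ⋃ i, dyadicCube n a l (K i) (M i)) :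
    ENNReal.ofReal (((2 : ℝ) ^ (-k) * l) ^ β) ≤
      ∑' i, ENNReal.ofReal (((2 : ℝ) ^ (-(K i)) * l) ^ β) := by
  set s := (2 : ℝ) ^ (-k) * l
  have hs : 0 < s := by positivity
  by_cases hbig : ∃ i, s ≤ (2 : ℝ) ^ (-(K i)) * l
  · obtain ⟨i, hi⟩ := hbig
    refine le_trans ?_ (ENNReal.le_tsum i)
    gcongr
  push Not at hbig
  have hsplit : ∀ u : ℝ, 0 < u →
      ENNReal.ofReal u ^ n = ENNReal.ofReal (u ^ β) * ENNReal.ofReal (u ^ ((n : ℝ) - β)) := by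
    intro u hu
    rw [← ENNReal.ofReal_mul (by positivity), ← Real.rpow_add hu, ← ENNReal.ofReal_pow hu.le]
    simp
  have hpos : 0 < ENNReal.ofReal (s ^ ((n : ℝ) - β)) := by
    rw [ENNReal.ofReal_pos]
    positivity
  rw [← ENNReal.mul_le_mul_iff_left hpos.ne' ENNReal.ofReal_ne_top, ← hsplit s hs,
    ← volume_dyadicCube (a := a) k m, ← ENNReal.tsum_mul_right]
  refine (measure_mono h).trans ((measure_iUnion_le _).trans (ENNReal.tsum_le_tsum fun i => ?_))
  rw [volume_dyadicCube, hsplit _ (by positivity)]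
  have := hbig i
  gcongr

lemma dist_cubeCorner_lt (hl : 0 < l) {x : Rn n} {k : ℤ} {m : Fin n → ℤ}
    (h : ∀ i, |x i - (a i + m i * ((2 : ℝ) ^ (-k) * l))| ≤ 3 * ((2 : ℝ) ^ (-k) * l)) :
    x ∈ ball (cubeCorner n a l k m) ((3 * n + 1) * ((2 : ℝ) ^ (-k) * l)) := by
  set s := (2 : ℝ) ^ (-k) * l
  have hs : 0 < s := by positivity
  rw [mem_ball, EuclideanSpace.dist_eq, Real.sqrt_lt' (by positivity)]
  calc ∑ i, dist (x i) (cubeCorner n a l k m i) ^ 2 ≤ ∑ _i : Fin n, (3 * s) ^ 2 := by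
        gcongr with i
        exact h i
    _ = n * (3 * s) ^ 2 := by simp
    _ < _ := by
        have : (0 : ℝ) < s ^ 2 := by positivity
        have hn : (n : ℝ) ≤ (n : ℝ) ^ 2 := by exact_mod_cast Nat.le_self_pow two_ne_zero n
        nlinarith [mul_le_mul_of_nonneg_right hn this.le, (Nat.cast_nonneg n : (0 : ℝ) ≤ n),
          mul_nonneg (Nat.cast_nonneg n : (0 : ℝ) ≤ n) this.le]

lemma dyadicCube_subset_ball (hl : 0 < l) (k : ℤ) (m : Fin n → ℤ) :
    dyadicCube n a l k m ⊆ ball (cubeCorner n a l k m) ((3 * n + 1) * ((2 : ℝ) ^ (-k) * l)) := by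
  intro x hx
  have hs : 0 < (2 : ℝ) ^ (-k) * l := by positivity
  refine dist_cubeCorner_lt hl fun i => abs_le.2 ?_
  have := hx i
  constructor <;> nlinarith

lemma exists_dyadicCubes_cover_ball (a : Rn n) (hl : 0 < l) (x : Rn n) {r : ℝ} (hr : 0 < r) :
    ∃ (k : ℤ) (m : (Fin n → Fin 2) → Fin n → ℤ), (2 : ℝ) ^ (-k) * l ≤ 4 * r ∧
      ball x r ⊆ ⋃ e, dyadicCube n a l k (m e) ∧
      ∀ e i, |x i - (a i + m e i * ((2 : ℝ) ^ (-k) * l))| ≤ 2 * ((2 : ℝ) ^ (-k) * l) := by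
  obtain ⟨j, hj1, hj2⟩ := exists_mem_Ioc_zpow (x := 2 * r / l) (y := (2 : ℝ)) (by positivity)
    one_lt_two
  rw [lt_div_iff₀ hl] at hj1
  rw [div_le_iff₀ hl] at hj2
  refine ⟨-(j + 1), fun e i => ⌊(x i - r - a i) / ((2 : ℝ) ^ (j + 1) * l)⌋ + (e i : ℕ), ?_, ?_, ?_⟩
  · rw [neg_neg, zpow_add_one₀ two_ne_zero]
    linarith
  all_goals
    set s := (2 : ℝ) ^ (j + 1) * l with hs_def
    have hs : 0 < s := by positivity
    have hf : ∀ i, (⌊(x i - r - a i) / s⌋ : ℝ) * s ≤ x i - r - a i ∧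
        x i - r - a i < (⌊(x i - r - a i) / s⌋ + 1) * s := fun i =>
      ⟨(le_div_iff₀ hs).1 (Int.floor_le _), (div_lt_iff₀ hs).1 (Int.lt_floor_add_one _)⟩
  · intro y hy
    have hyx : ∀ i, |y i - x i| < r := fun i =>
      (PiLp.dist_apply_le y x i).trans_lt (mem_ball.1 hy)
    refine mem_iUnion.2 ⟨fun i =>
      if y i < a i + (⌊(x i - r - a i) / s⌋ + 1) * s then 0 else 1, fun i => ?_⟩
    obtain ⟨h1, h2⟩ := abs_lt.1 (hyx i)
    obtain ⟨h3, h4⟩ := hf i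
    rw [neg_neg, ← hs_def]
    dsimp only
    split_ifs with hlt
    · simp only [Fin.val_zero, Nat.cast_zero, add_zero]
      constructor <;> linarith
    · simp only [Fin.val_one, Nat.cast_one, Int.cast_add, Int.cast_one]
      constructor <;> linarith
  · intro e i
    obtain ⟨h3, h4⟩ := hf i
    have he0 : (0 : ℝ) ≤ ((e i : ℕ) : ℝ) := Nat.cast_nonneg _
    have he1 : ((e i : ℕ) : ℝ) ≤ 1 := by exact_mod_cast Nat.lt_succ_iff.1 (e i).2
    rw [neg_neg, ← hs_def, abs_le]
    push_cast
    constructor <;> nlinarith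

end Cubes

lemma exists_maximal_dyadicCubes {n : ℕ} {β : ℝ} (hβ0 : 0 < β) (hβn : β < n) {a : Rn n} {l : ℝ}
    (hl : 0 < l) {ι : Type*} [Countable ι] (K : ι → ℤ) (M : ι → Fin n → ℤ)
    (hfin : ∑' i, ENNReal.ofReal (((2 : ℝ) ^ (-(K i)) * l) ^ β) ≠ ∞) :
    ∃ G : Set (ℤ × (Fin n → ℤ)),
      (∀ k m, dyadicCube n a l k m ⊆ ⋃ i, dyadicCube n a l (K i) (M i) →
        ∃ q ∈ G, q.1 ≤ k ∧ dyadicCube n a l k m ⊆ dyadicCube n a l q.1 q.2) ∧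
      ∑' q : G, ENNReal.ofReal (((2 : ℝ) ^ (-q.1.1) * l) ^ β) ≤
        ∑' i, ENNReal.ofReal (((2 : ℝ) ^ (-(K i)) * l) ^ β) := by
  set U := ⋃ i, dyadicCube n a l (K i) (M i) with hU
  set S := ∑' i, ENNReal.ofReal (((2 : ℝ) ^ (-(K i)) * l) ^ β) with hS
  obtain ⟨G, hG⟩ : ∃ G : Set (ℤ × (Fin n → ℤ)), ∀ q, q ∈ G ↔ dyadicCube n a l q.1 q.2 ⊆ U ∧
      ∀ q' : ℤ × (Fin n → ℤ), dyadicCube n a l q'.1 q'.2 ⊆ U →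
        dyadicCube n a l q.1 q.2 ⊆ dyadicCube n a l q'.1 q'.2 → q.1 ≤ q'.1 :=
    ⟨{q | _}, fun q => Iff.rfl⟩
  refine ⟨G, fun k m hkm => ?_, ?_⟩
  · obtain ⟨j, hj⟩ := pow_unbounded_of_one_lt (S.toReal ^ β⁻¹ / l) one_lt_two
    rw [div_lt_iff₀ hl] at hj
    have hbdd : ∀ z : ℤ, (∃ p, dyadicCube n a l k m ⊆ dyadicCube n a l z p ∧
        dyadicCube n a l z p ⊆ U) → -(j : ℤ) ≤ z := by
      rintro z ⟨p, -, hp⟩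
      have h1 := rpow_side_le_tsum hβ0 hβn hl K M hp
      rw [ENNReal.ofReal_le_iff_le_toReal hfin,
        ← Real.le_rpow_inv_iff_of_pos (by positivity) ENNReal.toReal_nonneg hβ0] at h1
      have h2 := lt_of_mul_lt_mul_right (h1.trans_lt hj) hl.le
      rw [← zpow_natCast, zpow_lt_zpow_iff_right₀ one_lt_two] at h2
      lia
    obtain ⟨z, ⟨p, hp, hpU⟩, hmin⟩ := Int.exists_least_of_bdd ⟨_, hbdd⟩ ⟨k, m, subset_rfl, hkm⟩
    exact ⟨(z, p), (hG _).2 ⟨hpU, fun q hqU hq => hmin _ ⟨q.2, hp.trans hq, hqU⟩⟩,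
      hmin _ ⟨m, subset_rfl, hkm⟩, hp⟩
  have hle : ∀ q : G, ENNReal.ofReal (((2 : ℝ) ^ (-q.1.1) * l) ^ β) ≤
      ∑' i : {i // (dyadicCube n a l (K i) (M i) ∩ dyadicCube n a l q.1.1 q.1.2).Nonempty},
        ENNReal.ofReal (((2 : ℝ) ^ (-(K i)) * l) ^ β) := by
    intro q
    have hcov : dyadicCube n a l q.1.1 q.1.2 ⊆
        ⋃ i : {i // (dyadicCube n a l (K i) (M i) ∩ dyadicCube n a l q.1.1 q.1.2).Nonempty},
          dyadicCube n a l (K i) (M i) := by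
      intro y hy
      obtain ⟨i, hi⟩ := mem_iUnion.1 (((hG _).1 q.2).1 hy)
      exact mem_iUnion.2 ⟨⟨i, y, hi, hy⟩, hi⟩
    exact rpow_side_le_tsum hβ0 hβn hl _ _ hcov
  have hgen : ∀ q ∈ G, ∀ i, (dyadicCube n a l (K i) (M i) ∩ dyadicCube n a l q.1 q.2).Nonempty →
      dyadicCube n a l (K i) (M i) ⊆ dyadicCube n a l q.1 q.2 := by
    rintro q hq i ⟨y, hyi, hyq⟩
    refine dyadicCube_subset hl ?_ hyi hyq
    by_contra! hlt
    exact hlt.not_ge <| ((hG q).1 hq).2 (K i, M i) (subset_iUnion_of_subset i subset_rfl)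
      (dyadicCube_subset hl hlt.le hyq hyi)
  have huniq : ∀ q ∈ G, ∀ q' ∈ G, ∀ y, y ∈ dyadicCube n a l q.1 q.2 →
      y ∈ dyadicCube n a l q'.1 q'.2 → q.1 ≤ q'.1 → q = q' := by
    intro q hq q' hq' y hy hy' h
    have h' : q.1 = q'.1 :=
      le_antisymm h (((hG q').1 hq').2 q ((hG q).1 hq).1 (dyadicCube_subset hl h hy' hy))
    refine Prod.ext h' (dyadicCube_index_eq hl hy ?_)
    rwa [h']
  refine (ENNReal.tsum_le_tsum hle).trans ?_
  rw [← ENNReal.tsum_sigma]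
  refine ENNReal.tsum_comp_le_tsum_of_injective
    (f := fun p : (q : G) ×
      {i // (dyadicCube n a l (K i) (M i) ∩ dyadicCube n a l q.1.1 q.1.2).Nonempty} => p.2.1)
    ?_ (fun i => ENNReal.ofReal (((2 : ℝ) ^ (-(K i)) * l) ^ β))
  rintro ⟨q, i, hi⟩ ⟨q', i', hi'⟩ (rfl : i = i')
  have hc := cubeCorner_mem (a := a) hl (K i) (M i)
  have hcq := hgen q q.2 i hi hc
  have hcq' := hgen q' q'.2 i hi' hc
  obtain rfl : q = q' := by
    rcases le_total q.1.1 q'.1.1 with h | h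
    · exact Subtype.ext (huniq q q.2 q' q'.2 _ hcq hcq' h)
    · exact Subtype.ext (huniq q' q'.2 q q.2 _ hcq' hcq h).symm
  rfl

lemma hContent_le_dContent {n : ℕ} {β : ℝ} (hβ : 0 < β) {a : Rn n} {l : ℝ} (hl : 0 < l)
    (E : Set (Rn n)) :
    hContent n β E ≤
      omegaC β * ENNReal.ofReal ((3 * (n : ℝ) + 1) ^ β) * dContent n β a l E := by
  have h0 : omegaC β * ENNReal.ofReal ((3 * (n : ℝ) + 1) ^ β) ≠ 0 :=
    mul_ne_zero (omegaC_pos hβ).ne' (ENNReal.ofReal_pos.2 (by positivity)).ne'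
  have htop : omegaC β * ENNReal.ofReal ((3 * (n : ℝ) + 1) ^ β) ≠ ∞ :=
    ENNReal.mul_ne_top (omegaC_ne_top β) ENNReal.ofReal_ne_top
  rw [mul_comm, ← ENNReal.div_le_iff h0 htop]
  refine le_iInf₂ fun c hc => ?_
  rw [ENNReal.div_le_iff h0 htop, mul_comm, ← ENNReal.tsum_mul_left]
  refine (hContent_le_tsum hβ (fun i => cubeCorner n a l (c i).1 (c i).2)
    (fun i => (3 * n + 1) * ((2 : ℝ) ^ (-(c i).1) * l))
    (hc.trans (iUnion_mono fun i => dyadicCube_subset_ball hl _ _))).trans_eq ?_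
  refine tsum_congr fun i => ?_
  rw [Real.mul_rpow (by positivity) (by positivity), ENNReal.ofReal_mul (by positivity), mul_assoc]

lemma choquetOn_hContent_le {n : ℕ} {β : ℝ} (hβ : 0 < β) {a : Rn n} {l : ℝ} (hl : 0 < l)
    (A : Set (Rn n)) (f : Rn n → ℝ≥0∞) :
    choquetOn (hContent n β) A f ≤ omegaC β * ENNReal.ofReal ((3 * (n : ℝ) + 1) ^ β) *
      choquetOn (dContent n β a l) A f := by
  unfold choquetOn
  rw [← lintegral_const_mul' _ _ (ENNReal.mul_ne_top (omegaC_ne_top β) ENNReal.ofReal_ne_top)]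
  exact lintegral_mono fun t => hContent_le_dContent hβ hl _

/-- If the average of `f` over a ball is large, then one of the dyadic cubes of comparable size
covering the ball lies in a superlevel set of the dyadic maximal function. -/
lemma exists_dyadicCube_subset_superlevel {n : ℕ} {β : ℝ} (hβ : 0 < β) {a : Rn n} {l : ℝ}
    (hl : 0 < l) {f : Rn n → ℝ≥0∞} {c t : ℝ} (hc : 0 < c) (ht : 0 < t)
    (hcK : 2 ^ n * (3 * (n : ℝ) + 1) ^ β * 4 ^ β * c ≤ 1) {x : Rn n}
    (hx : ENNReal.ofReal t < maximalH n β f x) :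
    ∃ k m, dyadicCube n a l k m ⊆ {y | ENNReal.ofReal (c * t) < dyadicMaximal n β a l f y} ∧
      ∀ i, |x i - (a i + m i * ((2 : ℝ) ^ (-k) * l))| ≤ 2 * ((2 : ℝ) ^ (-k) * l) := by
  obtain ⟨r, hx⟩ := lt_iSup_iff.1 hx
  obtain ⟨hr, hx⟩ := lt_iSup_iff.1 hx
  obtain ⟨k, m, hkr, hcov, hnear⟩ := exists_dyadicCubes_cover_ball a hl x hr
  by_contra! hcon
  have hne : ∀ e, ∃ y ∈ dyadicCube n a l k (m e),
      dyadicMaximal n β a l f y ≤ ENNReal.ofReal (c * t) := by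
    intro e
    by_contra! hlt
    obtain ⟨i, hi⟩ := hcon k (m e) hlt
    exact hi.not_ge (hnear e i)
  set s := (2 : ℝ) ^ (-k) * l
  have hs : 0 < s := by positivity
  have hsβ : ENNReal.ofReal (s ^ β) ≠ 0 := (ENNReal.ofReal_pos.2 (by positivity)).ne'
  have hcube : ∀ e, choquetOn (dContent n β a l) (dyadicCube n a l k (m e)) f ≤
      ENNReal.ofReal (s ^ β) * ENNReal.ofReal (c * t) := by
    intro e
    obtain ⟨y, hy, hle⟩ := hne e
    rw [← ENNReal.inv_mul_le_iff hsβ ENNReal.ofReal_ne_top]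
    refine le_trans ?_ hle
    exact le_iSup_of_le k (le_iSup_of_le (m e) (le_iSup_of_le hy le_rfl))
  refine hx.not_ge ?_
  have hω : omegaC β * ENNReal.ofReal (r ^ β) ≠ 0 :=
    mul_ne_zero (omegaC_pos hβ).ne' (ENNReal.ofReal_pos.2 (by positivity)).ne'
  rw [ENNReal.inv_mul_le_iff hω (ENNReal.mul_ne_top (omegaC_ne_top β) ENNReal.ofReal_ne_top)]
  calc choquetOn (hContent n β) (ball x r) f
      ≤ ∑ e, choquetOn (hContent n β) (dyadicCube n a l k (m e)) f := choquetOn_iUnion_le hβ hcov f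
    _ ≤ ∑ _e : Fin n → Fin 2, omegaC β * ENNReal.ofReal ((3 * (n : ℝ) + 1) ^ β) *
          (ENNReal.ofReal (s ^ β) * ENNReal.ofReal (c * t)) := by
        refine Finset.sum_le_sum fun e _ => (choquetOn_hContent_le (a := a) hβ hl _ f).trans ?_
        gcongr
        exact hcube e
    _ = omegaC β * ENNReal.ofReal (2 ^ n * ((3 * (n : ℝ) + 1) ^ β * (s ^ β * (c * t)))) := by
        generalize c * t = u
        rw [ENNReal.ofReal_mul (by positivity), ENNReal.ofReal_mul (by positivity),
          ENNReal.ofReal_mul (by positivity), ENNReal.ofReal_pow (by norm_num)]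
        simp
        ring
    _ ≤ omegaC β * ENNReal.ofReal (r ^ β * t) := by
        gcongr omegaC β * ENNReal.ofReal ?_
        calc 2 ^ n * ((3 * (n : ℝ) + 1) ^ β * (s ^ β * (c * t)))
            ≤ 2 ^ n * ((3 * (n : ℝ) + 1) ^ β * ((4 * r) ^ β * (c * t))) := by gcongr
          _ = (2 ^ n * (3 * (n : ℝ) + 1) ^ β * 4 ^ β * c) * (r ^ β * t) := by
            rw [Real.mul_rpow (by norm_num) hr.le]
            ring
          _ ≤ 1 * (r ^ β * t) := by gcongr
          _ = r ^ β * t := one_mul _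
    _ = omegaC β * ENNReal.ofReal (r ^ β) * ENNReal.ofReal t := by
        rw [ENNReal.ofReal_mul (by positivity), mul_assoc]

/-- Dilating the dyadic cubes contained in a set increases its content by at most a constant
factor. -/
lemma hContent_le_of_near_dyadicCube {n : ℕ} {β : ℝ} (hβ0 : 0 < β) (hβn : β < n) {a : Rn n}
    {l : ℝ} (hl : 0 < l) {L E : Set (Rn n)}
    (hLE : ∀ x ∈ L, ∃ k m, dyadicCube n a l k m ⊆ E ∧
      ∀ i, |x i - (a i + m i * ((2 : ℝ) ^ (-k) * l))| ≤ 2 * ((2 : ℝ) ^ (-k) * l)) :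
    hContent n β L ≤
      ENNReal.ofReal (2 ^ n * (3 * (n : ℝ) + 1) ^ β * 4 ^ β) * hContent n β E := by
  set A : ℝ := 2 ^ n * (3 * (n : ℝ) + 1) ^ β * 4 ^ β with hA
  have hA0 : ENNReal.ofReal A ≠ 0 := (ENNReal.ofReal_pos.2 (by positivity)).ne'
  rw [mul_comm, ← ENNReal.div_le_iff hA0 ENNReal.ofReal_ne_top]
  refine le_iInf₂ fun c hc => ?_
  rw [ENNReal.div_le_iff hA0 ENNReal.ofReal_ne_top]
  choose k m hkr hcov _ using fun i : {i // 0 < (c i).2} =>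
    exists_dyadicCubes_cover_ball a hl (c i).1 i.2
  set K : {i // 0 < (c i).2} × (Fin n → Fin 2) → ℤ := fun p => k p.1
  set M : {i // 0 < (c i).2} × (Fin n → Fin 2) → Fin n → ℤ := fun p => m p.1 p.2
  have hEU : E ⊆ ⋃ p, dyadicCube n a l (K p) (M p) := by
    intro x hx
    obtain ⟨i, hi⟩ := mem_iUnion.1 (hc hx)
    obtain ⟨e, he⟩ := mem_iUnion.1 (hcov ⟨i, pos_of_mem_ball hi⟩ hi)
    exact mem_iUnion.2 ⟨(⟨i, pos_of_mem_ball hi⟩, e), he⟩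
  have hsum : omegaC β * ∑' p, ENNReal.ofReal (((2 : ℝ) ^ (-(K p)) * l) ^ β) ≤
      ENNReal.ofReal (2 ^ n * 4 ^ β) * ∑' i, omegaC β * ENNReal.ofReal ((c i).2 ^ β) := by
    rw [ENNReal.tsum_prod (f := fun i (_ : Fin n → Fin 2) =>
      ENNReal.ofReal (((2 : ℝ) ^ (-(k i)) * l) ^ β)), ← ENNReal.tsum_mul_left,
      ← ENNReal.tsum_mul_left]
    refine le_trans (ENNReal.tsum_le_tsum fun i => ?_)
      (ENNReal.tsum_comp_le_tsum_of_injective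
        (Subtype.val_injective (p := fun i => 0 < (c i).2)) _)
    have hci := i.2
    calc omegaC β * ∑' _e : Fin n → Fin 2, ENNReal.ofReal (((2 : ℝ) ^ (-(k i)) * l) ^ β)
        = omegaC β * ENNReal.ofReal (2 ^ n * ((2 : ℝ) ^ (-(k i)) * l) ^ β) := by
          rw [ENNReal.ofReal_mul (by positivity), ENNReal.ofReal_pow (by norm_num)]
          simp
      _ ≤ omegaC β * ENNReal.ofReal (2 ^ n * (4 * (c i).2) ^ β) := by
          gcongr omegaC β * ENNReal.ofReal (2 ^ n * ?_ ^ β)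
          exact hkr i
      _ = ENNReal.ofReal (2 ^ n * 4 ^ β) * (omegaC β * ENNReal.ofReal ((c i).2 ^ β)) := by
          rw [Real.mul_rpow (by norm_num) hci.le, ← mul_assoc, ENNReal.ofReal_mul (by positivity)]
          ring
  set S := ∑' i, omegaC β * ENNReal.ofReal ((c i).2 ^ β)
  rcases eq_or_ne S ∞ with hS | hS
  · rw [hS, ENNReal.top_mul hA0]
    exact le_top
  have hfin : ∑' p, ENNReal.ofReal (((2 : ℝ) ^ (-(K p)) * l) ^ β) ≠ ∞ := by
    intro h
    rw [h, ENNReal.mul_top (omegaC_pos hβ0).ne', top_le_iff] at hsum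
    exact ENNReal.mul_ne_top ENNReal.ofReal_ne_top hS hsum
  obtain ⟨G, hG, hGsum⟩ := exists_maximal_dyadicCubes (a := a) hβ0 hβn hl K M hfin
  have hLG : L ⊆ ⋃ q : G, ball (cubeCorner n a l q.1.1 q.1.2)
      ((3 * n + 1) * ((2 : ℝ) ^ (-q.1.1) * l)) := by
    intro x hx
    obtain ⟨j, p, hjE, hnear⟩ := hLE x hx
    obtain ⟨q, hq, hqj, hsub⟩ := hG j p (hjE.trans hEU)
    refine mem_iUnion.2 ⟨⟨q, hq⟩, dist_cubeCorner_lt hl fun i => ?_⟩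
    have hside : (2 : ℝ) ^ (-j) * l ≤ (2 : ℝ) ^ (-q.1) * l := by
      gcongr
      norm_num
    obtain ⟨h1, h2⟩ := hsub (cubeCorner_mem hl j p) i
    simp only [cubeCorner] at h1 h2
    obtain ⟨h3, h4⟩ := abs_le.1 (hnear i)
    rw [abs_le]
    constructor <;> linarith
  calc hContent n β L
      ≤ ∑' q : G, omegaC β * ENNReal.ofReal (((3 * n + 1) * ((2 : ℝ) ^ (-q.1.1) * l)) ^ β) :=
        hContent_le_tsum hβ0 _ _ hLG
    _ = ENNReal.ofReal ((3 * (n : ℝ) + 1) ^ β) *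
          (omegaC β * ∑' q : G, ENNReal.ofReal (((2 : ℝ) ^ (-q.1.1) * l) ^ β)) := by
        rw [← ENNReal.tsum_mul_left, ← ENNReal.tsum_mul_left]
        refine tsum_congr fun q => ?_
        rw [Real.mul_rpow (by positivity) (by positivity), ENNReal.ofReal_mul (by positivity)]
        ring
    _ ≤ ENNReal.ofReal ((3 * (n : ℝ) + 1) ^ β) * (ENNReal.ofReal (2 ^ n * 4 ^ β) * S) := by
        gcongr ENNReal.ofReal ((3 * (n : ℝ) + 1) ^ β) * ?_
        exact le_trans (by gcongr) hsum
    _ = S * ENNReal.ofReal A := by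
        rw [← mul_assoc, ← ENNReal.ofReal_mul (by positivity), mul_comm S, hA]
        congr 2
        ring

/-- Comparison of the level sets of the centered Hausdorff content
maximal function and the dyadic Hausdorff content maximal function associated
with the lattice generated by a cube `Q₀` (corner `a`, side length `l > 0`). -/
theorem statement11 (n : ℕ) (β : ℝ) (hβ0 : 0 < β) (hβn : β < n)
    (a : Rn n) (l : ℝ) (hl : 0 < l) :
    ∃ c C : ℝ, 0 < c ∧ 0 < C ∧ ∀ (f : Rn n → ℝ≥0∞) (t : ℝ), 0 < t →
      hContent n β {x | ENNReal.ofReal t < maximalH n β f x} ≤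
        ENNReal.ofReal C *
          hContent n β {x | ENNReal.ofReal (c * t) < dyadicMaximal n β a l f x} := by
  set A : ℝ := 2 ^ n * (3 * (n : ℝ) + 1) ^ β * 4 ^ β
  have hA : 0 < A := by positivity
  refine ⟨A⁻¹, A, inv_pos.2 hA, hA, fun f t ht => ?_⟩
  refine hContent_le_of_near_dyadicCube hβ0 hβn (a := a) hl fun x hx => ?_
  exact exists_dyadicCube_subset_superlevel hβ0 hl (inv_pos.2 hA) ht
    (mul_inv_cancel₀ hA.ne').le hx

end
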